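/- Let (Ω, F, (F_t)_{t≥0}) be a filtered measurable space and let P and Q be mutually absolutely continuous (equivalent) probability measures on F. For each stopping time τ, let Z_τ denote a Radon–Nikodym derivative of the restriction of Q to F_τ with respect to the restriction of P to F_τ. Let ζ = (ζ_t)_{t≥0} be a nonnegative progressively measurable process. Then ζ is of class (DL) under Q if and only if for every T ∈ (0,∞) the family {Z_τ · ζ_τ : τ ∈ T_T} is uniformly integrable under P. -/

import Mathlib

/-!
The density identity `∫_A |ζ_τ| dQ = ∫_A Z_τ |ζ_τ| dP` holds for every `A ∈ F_τ`, in particular on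
the level sets `{|ζ_τ| ≥ C}` and `{Z_τ |ζ_τ| ≥ C}`. Uniform integrability on one side makes these
integrals uniformly small as soon as the level sets are uniformly small for the measure on that
side. So what has to be shown is that `Z_τ ζ_τ` is bounded in probability under `Q`, respectively
that `ζ_τ` is bounded in probability under `P`. By Markov's inequality `ζ_τ` is bounded in
probability under `Q` and `Z_τ` under `P`, and equivalence of the two measures on `F_T` allows one
to exchange them.
-/

open MeasureTheory
open scoped ENNReal NNReal

/-- The family of values `{g τ : τ a stopping time, τ ≤ T}` is uniformly integrable under `μ`:
for every `ε > 0` there is a level `K` such that `E[|g τ|; |g τ| > K] ≤ ε` uniformly over all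
stopping times `τ ≤ T`. -/
def UIStopFam {Ω : Type*} {m0 : MeasurableSpace Ω} (ℱ : Filtration ℝ≥0 m0)
    (μ : Measure Ω) (g : (Ω → ℝ≥0) → Ω → ℝ) (T : ℝ≥0) : Prop :=
  ∀ ε : ℝ, 0 < ε → ∃ K : ℝ,
    ∀ τ : Ω → ℝ≥0, IsStoppingTime ℱ (fun ω => (τ ω : WithTop ℝ≥0)) → (∀ ω, τ ω ≤ T) →
      ∫⁻ ω in {ω | K < |g τ ω|}, ENNReal.ofReal |g τ ω| ∂μ ≤ ENNReal.ofReal ε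

lemma exists_pos_forall_measure_le_of_absolutelyContinuous {Ω : Type*} {m0 : MeasurableSpace Ω}
    {μ ν : Measure Ω} [SFinite μ] [IsFiniteMeasure ν] [ν.HaveLebesgueDecomposition μ]
    (hνμ : ν ≪ μ) {ε : ℝ≥0∞} (hε : 0 < ε) :
    ∃ δ > 0, ∀ s, μ s ≤ δ → ν s ≤ ε := by
  have hfin : ∫⁻ ω, ν.rnDeriv μ ω ∂μ ≠ ∞ := by
    rw [Measure.lintegral_rnDeriv hνμ]
    exact measure_ne_top ν Set.univ
  obtain ⟨η, hη, hsmall⟩ := exists_pos_setLIntegral_lt_of_measure_lt hfin hε.ne'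
  obtain ⟨δ, hδ, hδη⟩ := exists_between hη
  refine ⟨δ, hδ, fun s hs => ?_⟩
  rw [← Measure.setLIntegral_rnDeriv hνμ s]
  exact (hsmall s (hs.trans_lt hδη)).le

/-- A family of functions is bounded in probability (stochastically bounded) under `μ` if
`μ (‖f i‖ ≥ C)` is small for large `C`, uniformly in `i`. In finite dimension this is tightness of
the laws of the `f i`; it is stated on `Ω` so that the measure can be changed there. -/
def BoundedInProbability {Ω ι E : Type*} [NormedAddCommGroup E] {_ : MeasurableSpace Ω}
    (μ : Measure Ω) (f : ι → Ω → E) : Prop :=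
  ∀ ε : ℝ≥0∞, 0 < ε → ∃ C : ℝ≥0, ∀ i, μ {ω | C ≤ ‖f i ω‖₊} ≤ ε

namespace BoundedInProbability

variable {Ω ι E : Type*} [NormedAddCommGroup E] {m0 : MeasurableSpace Ω} {μ ν : Measure Ω}

lemma of_eLpNorm_one_le {f : ι → Ω → E} (hf : ∀ i, AEStronglyMeasurable (f i) μ) {B : ℝ≥0}
    (hB : ∀ i, eLpNorm (f i) 1 μ ≤ B) : BoundedInProbability μ f := by
  intro ε hε
  obtain ⟨r, hr, hrB⟩ := ENNReal.exists_nnreal_pos_mul_lt ENNReal.coe_ne_top hε.ne'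
  refine ⟨r⁻¹, fun i => ?_⟩
  have markov : (r⁻¹ : ℝ≥0) * μ {ω | r⁻¹ ≤ ‖f i ω‖₊} ≤ eLpNorm (f i) 1 μ := by
    simpa [enorm] using
      mul_meas_ge_le_pow_eLpNorm μ one_ne_zero ENNReal.one_ne_top (hf i) (r⁻¹ : ℝ≥0)
  calc μ {ω | r⁻¹ ≤ ‖f i ω‖₊}
      = r * ((r⁻¹ : ℝ≥0) * μ {ω | r⁻¹ ≤ ‖f i ω‖₊}) := by
        rw [← mul_assoc, ← ENNReal.coe_mul, mul_inv_cancel₀ hr.ne', ENNReal.coe_one, one_mul]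
    _ ≤ r * B := by gcongr; exact markov.trans (hB i)
    _ ≤ ε := hrB.le

lemma smul {𝕜 : Type*} [NormedField 𝕜] [NormedSpace 𝕜 E] {c : ι → Ω → 𝕜} {f : ι → Ω → E}
    (hc : BoundedInProbability μ c) (hf : BoundedInProbability μ f) :
    BoundedInProbability μ (fun i ω => c i ω • f i ω) := by
  intro ε hε
  obtain ⟨A, hA⟩ := hc (ε / 2) (ENNReal.half_pos hε.ne')
  obtain ⟨B, hB⟩ := hf (ε / 2) (ENNReal.half_pos hε.ne')
  refine ⟨A * B, fun i => ?_⟩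
  have hsub : {ω | A * B ≤ ‖c i ω • f i ω‖₊} ⊆ {ω | A ≤ ‖c i ω‖₊} ∪ {ω | B ≤ ‖f i ω‖₊} := by
    intro ω hω
    by_contra! hlt
    simp only [Set.mem_union, Set.mem_ofPred_eq, not_or, not_le, nnnorm_smul] at hω hlt
    exact hω.not_gt (mul_lt_mul'' hlt.1 hlt.2 zero_le zero_le)
  calc μ {ω | A * B ≤ ‖c i ω • f i ω‖₊}
      ≤ μ {ω | A ≤ ‖c i ω‖₊} + μ {ω | B ≤ ‖f i ω‖₊} :=
        (measure_mono hsub).trans (measure_union_le _ _)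
    _ ≤ ε / 2 + ε / 2 := add_le_add (hA i) (hB i)
    _ = ε := ENNReal.add_halves ε

lemma of_trim_absolutelyContinuous {m : MeasurableSpace Ω} (hm : m ≤ m0) [IsFiniteMeasure μ]
    [IsFiniteMeasure ν] (hνμ : ν.trim hm ≪ μ.trim hm) {f : ι → Ω → E}
    (hf : ∀ i, StronglyMeasurable[m] (f i)) (h : BoundedInProbability μ f) :
    BoundedInProbability ν f := by
  intro ε hε
  obtain ⟨δ, hδ, hsmall⟩ := exists_pos_forall_measure_le_of_absolutelyContinuous hνμ hε
  obtain ⟨C, hC⟩ := h δ hδ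
  refine ⟨C, fun i => (le_trim hm).trans (hsmall _ ?_)⟩
  have hlevel : MeasurableSet[m] {ω | C ≤ ‖f i ω‖₊} :=
    measurableSet_le measurable_const (hf i).nnnorm.measurable
  rw [trim_measurableSet_eq hm hlevel]
  exact hC i

end BoundedInProbability

lemma uniformIntegrable_of_eLpNorm_indicator_le {Ω ι E F : Type*} [NormedAddCommGroup E]
    [NormedAddCommGroup F] {m0 : MeasurableSpace Ω} {μ ν : Measure Ω} [IsFiniteMeasure ν]
    {p : ℝ≥0∞} (hp : 1 ≤ p) (hp' : p ≠ ∞) {𝓖 : ι → MeasurableSpace Ω} (h𝓖 : ∀ i, 𝓖 i ≤ m0)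
    {f : ι → Ω → E} {g : ι → Ω → F} (hf : UniformIntegrable f p μ)
    (hg : ∀ i, StronglyMeasurable[𝓖 i] (g i)) (hgμ : BoundedInProbability μ g)
    (hgf : ∀ i A, MeasurableSet[𝓖 i] A →
      eLpNorm (A.indicator (g i)) p ν ≤ eLpNorm (A.indicator (f i)) p μ) :
    UniformIntegrable g p ν := by
  refine uniformIntegrable_of hp hp' (fun i => ((hg i).mono (h𝓖 i)).aestronglyMeasurable) ?_
  intro ε hε
  obtain ⟨δ, hδ, hsmall⟩ := hf.unifIntegrable hε
  obtain ⟨C, hC⟩ := hgμ (ENNReal.ofReal δ) (ENNReal.ofReal_pos.2 hδ)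
  refine ⟨C, fun i => ?_⟩
  have hlevel : MeasurableSet[𝓖 i] {ω | C ≤ ‖g i ω‖₊} :=
    measurableSet_le measurable_const (hg i).nnnorm.measurable
  exact (hgf i _ hlevel).trans (hsmall i _ (h𝓖 i _ hlevel) (hC i))

section Density

variable {Ω E : Type*} [NormedAddCommGroup E] {m0 : MeasurableSpace Ω} {P Q : Measure Ω}

lemma eLpNorm_one_eq_of_trim_eq_withDensity {m : MeasurableSpace Ω} (hm : m ≤ m0)
    {𝕜 : Type*} [NormedField 𝕜] [NormedSpace 𝕜 E] {z : Ω → 𝕜} (hz : StronglyMeasurable[m] z)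
    (hQ : Q.trim hm = (P.trim hm).withDensity fun ω => ‖z ω‖ₑ)
    {x : Ω → E} (hx : StronglyMeasurable[m] x) :
    eLpNorm x 1 Q = eLpNorm (fun ω => z ω • x ω) 1 P := by
  have hzx : StronglyMeasurable[m] fun ω => z ω • x ω := hz.smul hx
  rw [← eLpNorm_trim hm hx, ← eLpNorm_trim hm hzx, eLpNorm_one_eq_lintegral_enorm,
    eLpNorm_one_eq_lintegral_enorm, hQ, lintegral_withDensity_eq_lintegral_mul _ hz.enorm hx.enorm]
  simp only [Pi.mul_apply, enorm_smul]

lemma eLpNorm_one_indicator_eq_of_trim_eq_withDensity {m : MeasurableSpace Ω} (hm : m ≤ m0)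
    {𝕜 : Type*} [NormedField 𝕜] [NormedSpace 𝕜 E] {z : Ω → 𝕜} (hz : StronglyMeasurable[m] z)
    (hQ : Q.trim hm = (P.trim hm).withDensity fun ω => ‖z ω‖ₑ)
    {x : Ω → E} (hx : StronglyMeasurable[m] x) {A : Set Ω} (hA : MeasurableSet[m] A) :
    eLpNorm (A.indicator x) 1 Q = eLpNorm (A.indicator fun ω => z ω • x ω) 1 P := by
  rw [Set.indicator_smul]
  exact eLpNorm_one_eq_of_trim_eq_withDensity hm hz hQ (hx.indicator hA)

lemma eLpNorm_one_of_trim_eq_withDensity {m : MeasurableSpace Ω} (hm : m ≤ m0) {z : Ω → E}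
    (hz : StronglyMeasurable[m] z) (hQ : Q.trim hm = (P.trim hm).withDensity fun ω => ‖z ω‖ₑ) :
    eLpNorm z 1 P = Q Set.univ := by
  rw [← eLpNorm_trim hm hz, eLpNorm_one_eq_lintegral_enorm, ← setLIntegral_univ,
    ← withDensity_apply _ MeasurableSet.univ, ← hQ, trim_measurableSet_eq hm MeasurableSet.univ]

theorem uniformIntegrable_iff_smul_density {ι 𝕜 : Type*} [NormedField 𝕜] [NormedSpace 𝕜 E]
    [IsFiniteMeasure P] [IsFiniteMeasure Q] {m : MeasurableSpace Ω} (hm : m ≤ m0)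
    (hPQ : P.trim hm ≪ Q.trim hm) (hQP : Q.trim hm ≪ P.trim hm)
    {𝓖 : ι → MeasurableSpace Ω} (h𝓖 : ∀ i, 𝓖 i ≤ m)
    {z : ι → Ω → 𝕜} (hz : ∀ i, StronglyMeasurable[𝓖 i] (z i))
    (hQ : ∀ i, Q.trim ((h𝓖 i).trans hm) =
      (P.trim ((h𝓖 i).trans hm)).withDensity fun ω => ‖z i ω‖ₑ)
    {x : ι → Ω → E} (hx : ∀ i, StronglyMeasurable[𝓖 i] (x i)) :
    UniformIntegrable x 1 Q ↔ UniformIntegrable (fun i ω => z i ω • x i ω) 1 P := by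
  have h𝓖' (i : ι) : 𝓖 i ≤ m0 := (h𝓖 i).trans hm
  have hzm (i : ι) : StronglyMeasurable[m] (z i) := (hz i).mono (h𝓖 i)
  have hxm (i : ι) : StronglyMeasurable[m] (x i) := (hx i).mono (h𝓖 i)
  have change (i : ι) (A : Set Ω) (hA : MeasurableSet[𝓖 i] A) :
      eLpNorm (A.indicator (x i)) 1 Q = eLpNorm (A.indicator fun ω => z i ω • x i ω) 1 P :=
    eLpNorm_one_indicator_eq_of_trim_eq_withDensity (h𝓖' i) (hz i) (hQ i) (hx i) hA
  refine ⟨fun hUI => ?_, fun hUI => ?_⟩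
  · obtain ⟨B, hB⟩ := hUI.2.2
    have hzP : BoundedInProbability P z := by
      refine .of_eLpNorm_one_le (B := (Q Set.univ).toNNReal)
        (fun i => ((hzm i).mono hm).aestronglyMeasurable) fun i => ?_
      rw [ENNReal.coe_toNNReal (measure_ne_top Q _),
        eLpNorm_one_of_trim_eq_withDensity (h𝓖' i) (hz i) (hQ i)]
    have hzxQ : BoundedInProbability Q fun i ω => z i ω • x i ω :=
      (hzP.of_trim_absolutelyContinuous hm hQP hzm).smul (.of_eLpNorm_one_le hUI.1 hB)
    exact uniformIntegrable_of_eLpNorm_indicator_le le_rfl ENNReal.one_ne_top h𝓖' hUI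
      (fun i => (hz i).smul (hx i)) hzxQ fun i A hA => (change i A hA).ge
  · obtain ⟨B, hB⟩ := hUI.2.2
    have hxQ : BoundedInProbability Q x :=
      .of_eLpNorm_one_le (fun i => ((hxm i).mono hm).aestronglyMeasurable) fun i =>
        (eLpNorm_one_eq_of_trim_eq_withDensity (h𝓖' i) (hz i) (hQ i) (hx i)).trans_le (hB i)
    exact uniformIntegrable_of_eLpNorm_indicator_le le_rfl ENNReal.one_ne_top h𝓖' hUI hx
      (hxQ.of_trim_absolutelyContinuous hm hPQ hxm) fun i A hA => (change i A hA).le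

lemma trim_eq_withDensity_enorm {m : MeasurableSpace Ω} (hm : m ≤ m0) {z : Ω → ℝ}
    (hz : Measurable[m] z) (hz0 : ∀ᵐ ω ∂P, 0 ≤ z ω)
    (hQ : ∀ A, MeasurableSet[m] A → Q A = ∫⁻ ω in A, ENNReal.ofReal (z ω) ∂P) :
    Q.trim hm = (P.trim hm).withDensity fun ω => ‖z ω‖ₑ := by
  refine @Measure.ext _ m _ _ fun A hA => ?_
  rw [trim_measurableSet_eq hm hA, withDensity_apply _ hA, restrict_trim hm _ hA,
    lintegral_trim hm hz.enorm, hQ A hA]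
  refine lintegral_congr_ae (ae_restrict_of_ae ?_)
  filter_upwards [hz0] with ω hω using (Real.enorm_of_nonneg hω).symm

end Density

/-- The set `𝒯_T` of stopping times bounded by `T`, as an index type. The stopping times are
`ℝ≥0`-valued functions, as in `UIStopFam`. -/
abbrev StoppingTimeLE {Ω : Type*} {m0 : MeasurableSpace Ω} (ℱ : Filtration ℝ≥0 m0) (T : ℝ≥0) :
    Type _ :=
  {τ : Ω → ℝ≥0 // IsStoppingTime ℱ (fun ω => (τ ω : WithTop ℝ≥0)) ∧ ∀ ω, τ ω ≤ T}

lemma uiStopFam_iff_uniformIntegrable {Ω : Type*} {m0 : MeasurableSpace Ω}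
    {ℱ : Filtration ℝ≥0 m0} {μ : Measure Ω} [IsFiniteMeasure μ] {g : (Ω → ℝ≥0) → Ω → ℝ} {T : ℝ≥0}
    (hg : ∀ τ : StoppingTimeLE ℱ T, Measurable (g τ)) :
    UIStopFam ℱ μ g T ↔ UniformIntegrable (fun τ : StoppingTimeLE ℱ T => g τ) 1 μ := by
  have tail (C : ℝ≥0) (τ : StoppingTimeLE ℱ T) :
      eLpNorm ({ω | C ≤ ‖g τ ω‖₊}.indicator (g τ)) 1 μ =
        ∫⁻ ω in {ω | (C : ℝ) ≤ |g τ ω|}, ENNReal.ofReal |g τ ω| ∂μ := by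
    rw [eLpNorm_indicator_eq_eLpNorm_restrict (measurableSet_le measurable_const (hg τ).nnnorm),
      eLpNorm_one_eq_lintegral_enorm]
    simp only [Real.enorm_eq_ofReal_abs, ← NNReal.coe_le_coe, coe_nnnorm, Real.norm_eq_abs]
  rw [uniformIntegrable_iff le_rfl ENNReal.one_ne_top,
    and_iff_right fun τ => (hg τ).aestronglyMeasurable]
  simp only [tail]
  refine forall₂_congr fun ε _ => ⟨fun ⟨K, hK⟩ => ?_, fun ⟨C, hC⟩ => ?_⟩
  · refine ⟨K.toNNReal + 1, fun τ => le_trans ?_ (hK τ τ.2.1 τ.2.2)⟩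
    refine lintegral_mono_set fun ω (hω : ((K.toNNReal + 1 : ℝ≥0) : ℝ) ≤ |g τ ω|) => ?_
    calc K < K.toNNReal + 1 := (Real.le_coe_toNNReal K).trans_lt (lt_add_one _)
      _ ≤ |g τ ω| := mod_cast hω
  · refine ⟨C, fun τ hτ hτT => le_trans ?_ (hC ⟨τ, hτ, hτT⟩)⟩
    exact lintegral_mono_set fun ω (hω : (C : ℝ) < |g τ ω|) => hω.le

theorem classDL_iff_density_family_UI_general {Ω : Type*} {m0 : MeasurableSpace Ω}
    (ℱ : Filtration ℝ≥0 m0) (T : ℝ≥0) (P Q : Measure Ω) [IsFiniteMeasure P] [IsFiniteMeasure Q]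
    (hPQ : P.trim (ℱ.le T) ≪ Q.trim (ℱ.le T)) (Z : (Ω → ℝ≥0) → Ω → ℝ)
    (hZ : ∀ τ : Ω → ℝ≥0, ∀ hτ : IsStoppingTime ℱ (fun ω => (τ ω : WithTop ℝ≥0)),
      (∀ ω, τ ω ≤ T) →
      Measurable[hτ.measurableSpace] (Z τ) ∧
      (∀ᵐ ω ∂P, 0 ≤ Z τ ω) ∧
      ∀ A : Set Ω, MeasurableSet[hτ.measurableSpace] A →
        Q A = ∫⁻ ω in A, ENNReal.ofReal (Z τ ω) ∂P)
    (ζ : ℝ≥0 → Ω → ℝ) (hζ : IsStronglyProgressive ℱ ζ) :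
    UIStopFam ℱ Q (fun τ => stoppedValue ζ (fun ω => (τ ω : WithTop ℝ≥0))) T ↔
      UIStopFam ℱ P (fun τ ω => Z τ ω * stoppedValue ζ (fun ω => (τ ω : WithTop ℝ≥0)) ω) T := by
  have hle (τ : StoppingTimeLE ℱ T) : τ.2.1.measurableSpace ≤ ℱ T :=
    τ.2.1.measurableSpace_le_of_le_const fun ω => WithTop.coe_le_coe.2 (τ.2.2 ω)
  have hZm (τ : StoppingTimeLE ℱ T) : Measurable[τ.2.1.measurableSpace] (Z τ) :=
    (hZ τ τ.2.1 τ.2.2).1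
  have hζm (τ : StoppingTimeLE ℱ T) : Measurable[τ.2.1.measurableSpace]
      (stoppedValue ζ fun ω => (τ.1 ω : WithTop ℝ≥0)) := measurable_stoppedValue hζ τ.2.1
  have hdens (τ : StoppingTimeLE ℱ T) := trim_eq_withDensity_enorm ((hle τ).trans (ℱ.le T))
    (hZm τ) (hZ τ τ.2.1 τ.2.2).2.1 (hZ τ τ.2.1 τ.2.2).2.2
  have hQP : Q.trim (ℱ.le T) ≪ P.trim (ℱ.le T) := by
    refine Measure.AbsolutelyContinuous.mk fun A hA hPA => ?_
    rw [trim_measurableSet_eq _ hA] at hPA ⊢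
    rw [← IsStoppingTime.measurableSpace_const ℱ T] at hA
    rw [(hZ (fun _ => T) (isStoppingTime_const ℱ T) fun _ => le_rfl).2.2 A hA,
      setLIntegral_measure_zero _ _ hPA]
  rw [uiStopFam_iff_uniformIntegrable fun τ => (hζm τ).mono ((hle τ).trans (ℱ.le T)) le_rfl,
    uiStopFam_iff_uniformIntegrable fun τ =>
      ((hZm τ).mul (hζm τ)).mono ((hle τ).trans (ℱ.le T)) le_rfl]
  exact uniformIntegrable_iff_smul_density (ℱ.le T) hPQ hQP hle
    (fun τ => (hZm τ).stronglyMeasurable) hdens fun τ => (hζm τ).stronglyMeasurable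

/-- Let `P` and `Q` be equivalent probability measures on a filtered space,
and for each stopping time `τ` let `Z τ` be a Radon–Nikodym derivative of `Q` restricted to
`F_τ` with respect to `P` restricted to `F_τ` (i.e. `Z τ` is `F_τ`-measurable, `P`-a.e.
nonnegative, and `Q(A) = ∫_A Z τ dP` for all `A ∈ F_τ`). Let `ζ` be a nonnegative progressively
measurable process. Then `ζ` is of class (DL) under `Q` if and only if for every `T ∈ (0,∞)`
the family `{Z_τ · ζ_τ : τ ∈ 𝒯_T}` is uniformly integrable under `P`. -/
theorem classDL_iff_density_family_UI
    {Ω : Type*} {m0 : MeasurableSpace Ω} (ℱ : Filtration ℝ≥0 m0)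
    (P Q : Measure Ω) [IsProbabilityMeasure P] [IsProbabilityMeasure Q]
    (hPQ : P ≪ Q) (hQP : Q ≪ P)
    (Z : (Ω → ℝ≥0) → Ω → ℝ)
    (hZ : ∀ τ : Ω → ℝ≥0, ∀ hτ : IsStoppingTime ℱ (fun ω => (τ ω : WithTop ℝ≥0)),
      Measurable[hτ.measurableSpace] (Z τ) ∧
      (∀ᵐ ω ∂P, 0 ≤ Z τ ω) ∧
      ∀ A : Set Ω, MeasurableSet[hτ.measurableSpace] A →
        Q A = ∫⁻ ω in A, ENNReal.ofReal (Z τ ω) ∂P)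
    (ζ : ℝ≥0 → Ω → ℝ) (hζ : ProgMeasurable ℱ ζ)
    (hζnonneg : ∀ t ω, 0 ≤ ζ t ω) :
    (∀ T : ℝ≥0, 0 < T → UIStopFam ℱ Q (fun τ => stoppedValue ζ (fun ω => (τ ω : WithTop ℝ≥0))) T) ↔
    (∀ T : ℝ≥0, 0 < T →
      UIStopFam ℱ P (fun τ ω => Z τ ω * stoppedValue ζ (fun ω => (τ ω : WithTop ℝ≥0)) ω) T) :=
  forall₂_congr fun T _ => classDL_iff_density_family_UI_general ℱ T P Q (hPQ.trim (ℱ.le T)) Z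
    (fun τ hτ _ => hZ τ hτ) ζ hζ
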